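/- arXiv:0705.1392 — 3 statements merged into one kernel-verified Lean document; each statement's English description precedes it below -/
import Mathlib

section
/- Let Ω be an open interval of ℝ and let k be a natural number. If f : ℝ → ℝ is k times continuously differentiable and has compact support contained in Ω, then there exist functions f₁, f₂ : ℝ → ℝ, each k times continuously differentiable with compact support contained in Ω, such that f₁ and f₂ are nonnegative, f = f₁ - f₂, and the pointwise square roots √f₁ and √f₂ are also k times continuously differentiable with compact support contained in Ω. -/
/-!
If `f = u * v` with `|v| ≤ u`, then `f = ((u + v) / 2) ^ 2 - ((u - v) / 2) ^ 2` is a difference of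
squares of nonnegative functions. Given a nonnegative cutoff `χ ∈ C^n_c(Ω)` equal to `1` on the
support of `f`, the choice `u = (1 + f ^ 2) * χ` and `v = f / (1 + f ^ 2)` has these properties.
-/

open Set TopologicalSpace
open scoped Distributions Manifold

section TestFunctions

variable {E F : Type*} [NormedAddCommGroup E] [NormedSpace ℝ E]
  [NormedAddCommGroup F] [NormedSpace ℝ F] {Ω : Opens E} {n : ℕ∞}

/-- The product of a test function with a scalar `C^n` function, which need not be compactly
supported, bundled as a test function. -/
def contDiffSMul {a : E → ℝ} (ha : ContDiff ℝ n a) (φ : 𝓓^{n}(Ω, F)) : 𝓓^{n}(Ω, F) where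
  toFun x := a x • φ x
  contDiff' := ha.smul φ.contDiff
  hasCompactSupport' := φ.hasCompactSupport.smul_left
  tsupport_subset' := (tsupport_smul_subset_right a φ).trans φ.tsupport_subset

theorem abs_div_one_add_sq_le_one_add_sq (t : ℝ) : |t / (1 + t ^ 2)| ≤ 1 + t ^ 2 := by
  have hone : 1 ≤ 1 + t ^ 2 := le_add_of_nonneg_right (sq_nonneg t)
  rw [abs_div, abs_of_pos (one_pos.trans_le hone)]
  calc |t| / (1 + t ^ 2) ≤ |t| := div_le_self (abs_nonneg t) hone
    _ ≤ 1 + t ^ 2 := by nlinarith [sq_abs t, sq_nonneg (|t| - 1)]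

theorem exists_testFunction_mul_eq_of_eqOn_one {f χ : 𝓓^{n}(Ω, ℝ)} (hχ_nonneg : ∀ x, 0 ≤ χ x)
    (hχ_one : EqOn χ 1 (Function.support f)) :
    ∃ u v : 𝓓^{n}(Ω, ℝ), (∀ x, |v x| ≤ u x) ∧ ∀ x, f x = u x * v x := by
  have hw : ContDiff ℝ n fun x => 1 + f x ^ 2 := contDiff_const.add (f.contDiff.pow 2)
  have hw_pos (x : E) : 0 < 1 + f x ^ 2 := by positivity
  let u := contDiffSMul hw χ
  let v := contDiffSMul (hw.inv fun x => (hw_pos x).ne') f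
  have hu (x : E) : u x = (1 + f x ^ 2) * χ x := rfl
  have hv (x : E) : v x = f x / (1 + f x ^ 2) := (div_eq_inv_mul _ _).symm
  refine ⟨u, v, fun x => ?_, fun x => ?_⟩ <;> rw [hu, hv] <;>
    rcases eq_or_ne (f x) 0 with hfx | hfx
  · simpa [hfx] using hχ_nonneg x
  · simpa [hχ_one hfx] using abs_div_one_add_sq_le_one_add_sq (f x)
  · simp [hfx]
  · rw [hχ_one hfx, Pi.one_apply, mul_one, mul_div_cancel₀ _ (hw_pos x).ne']

theorem exists_testFunction_nonneg_eqOn_one [FiniteDimensional ℝ E] {K : Set E} (hK : IsCompact K)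
    (hKΩ : K ⊆ Ω) : ∃ χ : 𝓓^{n}(Ω, ℝ), (∀ x, 0 ≤ χ x) ∧ EqOn χ 1 K := by
  obtain ⟨U, hU, hKU, hUΩ, hU_compact⟩ :=
    exists_open_between_and_isCompact_closure hK Ω.isOpen hKΩ
  obtain ⟨χ, hχ, hχ_range, hχ_support, hχ_one⟩ :=
    exists_contMDiff_support_eq_eq_one_iff 𝓘(ℝ, E) (n := n) hU hK.isClosed hKU
  have hχ_tsupport : tsupport χ = closure U := by rw [tsupport, hχ_support]
  exact ⟨⟨χ, hχ.contDiff, by rwa [HasCompactSupport, hχ_tsupport], by rwa [hχ_tsupport]⟩,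
    fun x => (hχ_range ⟨x, rfl⟩).1, fun x hx => (hχ_one x).1 hx⟩

theorem exists_testFunction_nonneg_sq_sub_sq [FiniteDimensional ℝ E] (f : 𝓓^{n}(Ω, ℝ)) :
    ∃ g h : 𝓓^{n}(Ω, ℝ), (∀ x, 0 ≤ g x) ∧ (∀ x, 0 ≤ h x) ∧ ∀ x, f x = g x ^ 2 - h x ^ 2 := by
  obtain ⟨χ, hχ_nonneg, hχ_one⟩ := exists_testFunction_nonneg_eqOn_one (n := n)
    f.hasCompactSupport.isCompact f.tsupport_subset
  obtain ⟨u, v, hvu, hf⟩ := exists_testFunction_mul_eq_of_eqOn_one hχ_nonneg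
    (hχ_one.mono (subset_tsupport f))
  refine ⟨(1 / 2 : ℝ) • (u + v), (1 / 2 : ℝ) • (u - v), fun x => ?_, fun x => ?_, fun x => ?_⟩
  · change 0 ≤ 1 / 2 * (u x + v x)
    linarith [(abs_le.1 (hvu x)).1]
  · change 0 ≤ 1 / 2 * (u x - v x)
    linarith [(abs_le.1 (hvu x)).2]
  · change f x = (1 / 2 * (u x + v x)) ^ 2 - (1 / 2 * (u x - v x)) ^ 2
    rw [hf x]
    ring

theorem ssf_decomposition_sqrt_general [FiniteDimensional ℝ E] (f : 𝓓^{n}(Ω, ℝ)) :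
    ∃ f₁ f₂ g₁ g₂ : 𝓓^{n}(Ω, ℝ), (∀ x, 0 ≤ f₁ x) ∧ (∀ x, 0 ≤ f₂ x) ∧ f = f₁ - f₂ ∧
      (g₁ = fun x => √(f₁ x)) ∧ (g₂ = fun x => √(f₂ x)) := by
  obtain ⟨g, h, hg, hh, hf⟩ := exists_testFunction_nonneg_sq_sub_sq f
  refine ⟨contDiffSMul g.contDiff g, contDiffSMul h.contDiff h, g, h,
    fun x => mul_self_nonneg (g x), fun x => mul_self_nonneg (h x), ?_,
    funext fun x => (Real.sqrt_mul_self (hg x)).symm,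
    funext fun x => (Real.sqrt_mul_self (hh x)).symm⟩
  ext x
  change f x = g x * g x - h x * h x
  rw [hf x, sq, sq]

end TestFunctions

/-- If `Ω` is an open interval of `ℝ` and `f ∈ C^k_c(Ω)`, then there exist
nonnegative `f₁, f₂ ∈ C^k_c(Ω)` with `f = f₁ - f₂` and `√f₁, √f₂ ∈ C^k_c(Ω)`. -/
theorem ssf_decomposition_sqrt
    (Ω : Set ℝ) (hΩopen : IsOpen Ω) (hΩconn : Ω.OrdConnected) (k : ℕ)
    (f : ℝ → ℝ) (hf : ContDiff ℝ k f) (hfc : HasCompactSupport f)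
    (hfΩ : tsupport f ⊆ Ω) :
    ∃ f₁ f₂ : ℝ → ℝ,
      ContDiff ℝ k f₁ ∧ HasCompactSupport f₁ ∧ tsupport f₁ ⊆ Ω ∧
      ContDiff ℝ k f₂ ∧ HasCompactSupport f₂ ∧ tsupport f₂ ⊆ Ω ∧
      (∀ x, 0 ≤ f₁ x) ∧ (∀ x, 0 ≤ f₂ x) ∧
      f = f₁ - f₂ ∧
      ContDiff ℝ k (fun x => Real.sqrt (f₁ x)) ∧
      HasCompactSupport (fun x => Real.sqrt (f₁ x)) ∧
      tsupport (fun x => Real.sqrt (f₁ x)) ⊆ Ω ∧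
      ContDiff ℝ k (fun x => Real.sqrt (f₂ x)) ∧
      HasCompactSupport (fun x => Real.sqrt (f₂ x)) ∧
      tsupport (fun x => Real.sqrt (f₂ x)) ⊆ Ω := by
  obtain ⟨f₁, f₂, g₁, g₂, hf₁, hf₂, hsub, hg₁, hg₂⟩ :=
    ssf_decomposition_sqrt_general (Ω := ⟨Ω, hΩopen⟩) (n := k) ⟨f, hf, hfc, hfΩ⟩
  exact ⟨f₁, f₂, f₁.contDiff, f₁.hasCompactSupport, f₁.tsupport_subset,
    f₂.contDiff, f₂.hasCompactSupport, f₂.tsupport_subset, hf₁, hf₂, congrArg DFunLike.coe hsub,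
    hg₁ ▸ g₁.contDiff, hg₁ ▸ g₁.hasCompactSupport, hg₁ ▸ g₁.tsupport_subset,
    hg₂ ▸ g₂.contDiff, hg₂ ▸ g₂.hasCompactSupport, hg₂ ▸ g₂.tsupport_subset⟩
end

section
/- Let φ : ℝ → ℝ be the function φ(x) = x(1+x²)^{-1/2}. Then φ is twice continuously differentiable, and the Fourier transforms of its first derivative φ'(x) = (1+x²)^{-3/2} and of its second derivative φ''(x) = -3x(1+x²)^{-5/2} are both integrable functions on ℝ (that is, φ belongs to the class C²₊ of C² functions all of whose first and second derivatives have integrable Fourier transform). -/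
open MeasureTheory

/-- The Fourier transform with the normalization `𝓕f(ξ) = (2π)^{-1/2} ∫ f(x) e^{-iξx} dx`. -/
noncomputable def fourierTransform' (f : ℝ → ℂ) (ξ : ℝ) : ℂ :=
  (Real.sqrt (2 * Real.pi))⁻¹ • ∫ x : ℝ, f x * Complex.exp (-(Complex.I * ξ * x))

/-- The function `φ(x) = x (1 + x²)^{-1/2}`. -/
noncomputable def phiFn (x : ℝ) : ℝ := x * (1 + x ^ 2) ^ (-(1 : ℝ) / 2)

/-!
Two integrations by parts give `(1 + (2πw)²) ‖𝓕 f w‖ ≤ ‖f‖₁ + ‖f''‖₁`, so `𝓕 f` is integrable as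
soon as `f`, `f'` and `f''` are. The functions `x ^ k * (1 + x ^ 2) ^ s` have order `k + 2 * s` at
infinity, and differentiation turns such a function into a linear combination of functions of the
same kind and lower order. Hence those of order less than `-1` are integrable together with all
their derivatives; `φ'` has order `-3` and `φ''` has order `-4`.
-/

open FourierTransform Real

section FourierDecay

variable {E : Type*} [NormedAddCommGroup E] [NormedSpace ℂ E] {f f' f'' : ℝ → E}

lemma fourier_second_derivative (hf : ∀ x, HasDerivAt f (f' x) x)
    (hf' : ∀ x, HasDerivAt f' (f'' x) x) (hint : Integrable f) (hint' : Integrable f')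
    (hint'' : Integrable f'') (w : ℝ) :
    𝓕 f'' w = (2 * π * Complex.I * w) ^ 2 • 𝓕 f w := by
  obtain rfl : deriv f = f' := funext fun x => (hf x).deriv
  obtain rfl : deriv (deriv f) = f'' := funext fun x => (hf' x).deriv
  rw [Real.fourier_deriv hint' (fun x => (hf' x).differentiableAt) hint'',
    Real.fourier_deriv hint (fun x => (hf x).differentiableAt) hint']
  simp only [smul_smul, sq]

lemma one_add_sq_mul_norm_fourier_le (hf : ∀ x, HasDerivAt f (f' x) x)
    (hf' : ∀ x, HasDerivAt f' (f'' x) x) (hint : Integrable f) (hint' : Integrable f')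
    (hint'' : Integrable f'') (w : ℝ) :
    (1 + (2 * π * w) ^ 2) * ‖𝓕 f w‖ ≤ (∫ x, ‖f x‖) + ∫ x, ‖f'' x‖ := by
  have norm_fourier_le (g : ℝ → E) : ‖𝓕 g w‖ ≤ ∫ x, ‖g x‖ :=
    VectorFourier.norm_fourierIntegral_le_integral_norm _ _ _ _ _
  have norm_fourier_second_derivative : ‖𝓕 f'' w‖ = (2 * π * w) ^ 2 * ‖𝓕 f w‖ := by
    rw [fourier_second_derivative hf hf' hint hint' hint'', norm_smul]
    simp [mul_pow]
  calc (1 + (2 * π * w) ^ 2) * ‖𝓕 f w‖ = ‖𝓕 f w‖ + ‖𝓕 f'' w‖ := by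
        rw [norm_fourier_second_derivative]; ring
    _ ≤ _ := add_le_add (norm_fourier_le f) (norm_fourier_le f'')

theorem integrable_fourier_of_hasDerivAt (hf : ∀ x, HasDerivAt f (f' x) x)
    (hf' : ∀ x, HasDerivAt f' (f'' x) x) (hint : Integrable f) (hint' : Integrable f')
    (hint'' : Integrable f'') : Integrable (𝓕 f) := by
  have hcont : Continuous (𝓕 f) :=
    VectorFourier.fourierIntegral_continuous Real.continuous_fourierChar continuous_inner hint
  have hdom : Integrable fun w : ℝ => (1 + (2 * π * w) ^ 2)⁻¹ :=
    integrable_inv_one_add_sq.comp_mul_left' (by positivity)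
  refine (hdom.const_mul ((∫ x, ‖f x‖) + ∫ x, ‖f'' x‖)).mono' hcont.aestronglyMeasurable
    (.of_forall fun w => ?_)
  rw [← div_eq_mul_inv, le_div_iff₀' (by positivity)]
  exact one_add_sq_mul_norm_fourier_le hf hf' hint hint' hint'' w

end FourierDecay

lemma fourierTransform'_eq_smul_fourier (f : ℝ → ℂ) :
    fourierTransform' f = fun ξ => (√(2 * π))⁻¹ • 𝓕 f (ξ / (2 * π)) := by
  funext ξ
  rw [fourierTransform', Real.fourier_real_eq_integral_exp_smul]
  congr 2 with x
  have phase : -2 * π * x * (ξ / (2 * π)) = -(ξ * x) := by field_simp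
  rw [phase, smul_eq_mul, mul_comm]
  push_cast
  ring_nf

lemma integrable_fourierTransform'_of_integrable_fourier {f : ℝ → ℂ} (hf : Integrable (𝓕 f)) :
    Integrable (fourierTransform' f) := by
  rw [fourierTransform'_eq_smul_fourier]
  exact (hf.comp_div two_pi_pos.ne').smul (√(2 * π))⁻¹

lemma fourierTransform'_const_mul (c : ℂ) (f : ℝ → ℂ) :
    fourierTransform' (fun x => c * f x) = fun ξ => c * fourierTransform' f ξ := by
  funext ξ
  simp only [fourierTransform', mul_assoc, integral_const_mul, mul_smul_comm]

/-- The function `x ^ k * (1 + x ^ 2) ^ s`, a monomial in `x` and the square `1 + x ^ 2` of the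
Japanese bracket. Its order at infinity is `k + 2 * s`. The linear span of these functions is
closed under differentiation and contains `phiFn`. -/
noncomputable def bracketMonomial (k : ℕ) (s x : ℝ) : ℝ := x ^ k * (1 + x ^ 2) ^ s

section BracketMonomial

variable (k : ℕ) (s : ℝ)

lemma contDiff_bracketMonomial {n : WithTop ℕ∞} : ContDiff ℝ n (bracketMonomial k s) :=
  (contDiff_id.pow k).mul <|
    ContDiff.rpow_const_of_ne (by fun_prop) fun x => (by positivity : 1 + x ^ 2 ≠ 0)

lemma bracketMonomial_add_one (x : ℝ) :
    bracketMonomial k (s + 1) x = bracketMonomial k s x + bracketMonomial (k + 2) s x := by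
  simp only [bracketMonomial, rpow_add_one (by positivity : 1 + x ^ 2 ≠ 0)]
  ring

/- For `k = 0` the exponent `k - 1` is truncated, but its coefficient vanishes. -/
lemma hasDerivAt_bracketMonomial (x : ℝ) :
    HasDerivAt (bracketMonomial k s)
      (k * bracketMonomial (k - 1) s x + 2 * s * bracketMonomial (k + 1) (s - 1) x) x := by
  have hbase : HasDerivAt (fun x : ℝ => 1 + x ^ 2) (2 * x) x := by
    simpa using (hasDerivAt_pow 2 x).const_add 1
  refine ((hasDerivAt_pow k x).mul
    (hbase.rpow_const (p := s) (.inl (by positivity)))).congr_deriv ?_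
  simp only [bracketMonomial]
  ring

lemma deriv_bracketMonomial :
    deriv (bracketMonomial k s) = fun x =>
      k * bracketMonomial (k - 1) s x + 2 * s * bracketMonomial (k + 1) (s - 1) x :=
  funext fun x => (hasDerivAt_bracketMonomial k s x).deriv

lemma abs_bracketMonomial_le (x : ℝ) :
    |bracketMonomial k s x| ≤ (1 + x ^ 2) ^ ((k + 2 * s) / 2) := by
  have hpos : 0 < 1 + x ^ 2 := by positivity
  have abs_le_rpow : |x| ≤ (1 + x ^ 2) ^ (1 / 2 : ℝ) := by
    rw [← sqrt_eq_rpow]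
    exact abs_le_sqrt (by linarith)
  calc |bracketMonomial k s x| = |x| ^ k * (1 + x ^ 2) ^ s := by
        rw [bracketMonomial, abs_mul, abs_pow, abs_of_pos (rpow_pos_of_pos hpos s)]
    _ ≤ ((1 + x ^ 2) ^ (1 / 2 : ℝ)) ^ k * (1 + x ^ 2) ^ s := by gcongr
    _ = (1 + x ^ 2) ^ ((k + 2 * s) / 2) := by
        rw [← rpow_mul_natCast hpos.le, ← rpow_add hpos]
        ring_nf

variable {k s}

lemma integrable_bracketMonomial (h : k + 2 * s < -1) : Integrable (bracketMonomial k s) := by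
  have hdom : Integrable fun x : ℝ => (1 + x ^ 2) ^ ((k + 2 * s) / 2) := by
    simpa using integrable_rpow_neg_one_add_norm_sq (E := ℝ) (μ := volume) (r := -(k + 2 * s))
      (by rw [Module.finrank_self, Nat.cast_one]; linarith)
  exact hdom.mono' (contDiff_bracketMonomial k s (n := 0)).continuous.aestronglyMeasurable
    (.of_forall (abs_bracketMonomial_le k s))

lemma integrable_iteratedDeriv_bracketMonomial (n : ℕ) (h : k + 2 * s < -1) :
    Integrable (iteratedDeriv n (bracketMonomial k s)) := by
  induction n generalizing k s with
  | zero => simpa only [iteratedDeriv_zero] using integrable_bracketMonomial h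
  | succ n ih =>
    have horder_pred : ((k - 1 : ℕ) : ℝ) + 2 * s < -1 := by
      have : ((k - 1 : ℕ) : ℝ) ≤ k := mod_cast k.sub_le 1
      linarith
    have horder_succ : ((k + 1 : ℕ) : ℝ) + 2 * (s - 1) < -1 := by
      push_cast
      linarith
    have hiter : iteratedDeriv (n + 1) (bracketMonomial k s) = fun x =>
        k * iteratedDeriv n (bracketMonomial (k - 1) s) x +
          2 * s * iteratedDeriv n (bracketMonomial (k + 1) (s - 1)) x := by
      funext x
      rw [iteratedDeriv_succ', deriv_bracketMonomial, iteratedDeriv_fun_add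
        (contDiff_const.mul (contDiff_bracketMonomial _ _)).contDiffAt
        (contDiff_const.mul (contDiff_bracketMonomial _ _)).contDiffAt,
        iteratedDeriv_const_mul_field, iteratedDeriv_const_mul_field]
    rw [hiter]
    exact ((ih horder_pred).const_mul _).add ((ih horder_succ).const_mul _)

theorem integrable_fourier_bracketMonomial (h : k + 2 * s < -1) :
    Integrable (𝓕 fun x => (bracketMonomial k s x : ℂ)) := by
  have hsmooth : ContDiff ℝ 2 (bracketMonomial k s) := contDiff_bracketMonomial k s
  have hint' : Integrable (deriv (bracketMonomial k s)) := by
    simpa only [iteratedDeriv_one] using integrable_iteratedDeriv_bracketMonomial 1 h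
  have hint'' : Integrable (deriv (deriv (bracketMonomial k s))) := by
    simpa only [iteratedDeriv_succ, iteratedDeriv_zero] using
      integrable_iteratedDeriv_bracketMonomial 2 h
  exact integrable_fourier_of_hasDerivAt
    (fun x => (hsmooth.differentiable two_ne_zero x).hasDerivAt.ofReal_comp)
    (fun x => (hsmooth.differentiable_deriv_two x).hasDerivAt.ofReal_comp)
    (integrable_bracketMonomial h).ofReal hint'.ofReal hint''.ofReal

end BracketMonomial

lemma phiFn_eq_bracketMonomial : phiFn = bracketMonomial 1 (-1 / 2) := by
  funext x
  rw [phiFn, bracketMonomial, pow_one]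

lemma deriv_phiFn : deriv phiFn = bracketMonomial 0 (-3 / 2) := by
  funext x
  rw [phiFn_eq_bracketMonomial, deriv_bracketMonomial]
  calc _ = bracketMonomial 0 (-3 / 2 + 1) x - bracketMonomial 2 (-3 / 2) x := by
        norm_num [sub_eq_add_neg]
    _ = bracketMonomial 0 (-3 / 2) x := sub_eq_of_eq_add (bracketMonomial_add_one 0 _ x)

lemma deriv_deriv_phiFn : deriv (deriv phiFn) = fun x => -3 * bracketMonomial 1 (-5 / 2) x := by
  rw [deriv_phiFn, deriv_bracketMonomial]
  norm_num

/-- `φ(x) = x(1+x²)^{-1/2}` is `C²`, its first derivative is `(1+x²)^{-3/2}`,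
its second derivative is `-3x(1+x²)^{-5/2}`, and the Fourier transforms of the first and
second derivatives are integrable; i.e. `φ ∈ C²₊(ℝ)`. -/
theorem phi_mem_C2_plus :
    ContDiff ℝ 2 phiFn ∧
    (∀ x : ℝ, deriv phiFn x = (1 + x ^ 2) ^ (-(3 : ℝ) / 2)) ∧
    (∀ x : ℝ, deriv (deriv phiFn) x = -3 * x * (1 + x ^ 2) ^ (-(5 : ℝ) / 2)) ∧
    Integrable (fourierTransform' (fun x => Complex.ofReal (deriv phiFn x))) ∧
    Integrable (fourierTransform' (fun x => Complex.ofReal (deriv (deriv phiFn) x))) := by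
  refine ⟨?_, fun x => ?_, fun x => ?_, ?_, ?_⟩
  · rw [phiFn_eq_bracketMonomial]
    exact contDiff_bracketMonomial 1 (-1 / 2)
  · rw [deriv_phiFn, bracketMonomial, pow_zero, one_mul]
  · simp only [deriv_deriv_phiFn, bracketMonomial, pow_one, mul_assoc]
  · rw [deriv_phiFn]
    exact integrable_fourierTransform'_of_integrable_fourier
      (integrable_fourier_bracketMonomial (by norm_num))
  · simp only [deriv_deriv_phiFn, Complex.ofReal_mul, fourierTransform'_const_mul]
    exact (integrable_fourierTransform'_of_integrable_fourier
      (integrable_fourier_bracketMonomial (by norm_num))).const_mul _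
end

section
/- Let g : ℝ → ℝ be twice continuously differentiable with compact support. Then for all real numbers λ₀ ≠ λ₁, the divided difference of g admits the integral representation (g(λ₀) - g(λ₁)) / (λ₀ - λ₁) = (i/√(2π)) ∫_{ℝ²} 1_Π(s₀, s₁) · sgn(s₀) · 𝓕g(s₀) · e^{i(s₀ - s₁)λ₀} · e^{i s₁ λ₁} d(s₀, s₁), where the integral is with respect to two-dimensional Lebesgue measure and is absolutely convergent. -/
open MeasureTheory

/-- The region `Π = {(s₀, s₁) : |s₁| ≤ |s₀|, sign s₀ = sign s₁}`. -/
def PiRegion : Set (ℝ × ℝ) :=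
  {p : ℝ × ℝ | (0 ≤ p.2 ∧ p.2 ≤ p.1) ∨ (p.1 ≤ p.2 ∧ p.2 ≤ 0)}

/-!
Duhamel's formula `e^{isλ₁} - e^{isλ₀} = i (λ₁ - λ₀) ∫₀ˢ e^{i(s-t)λ₀} e^{itλ₁} dt`, multiplied by
`𝓕g(s)` and integrated over `s`, gives the representation by Fourier inversion; the orientation of
`∫₀ˢ` for `s < 0` is the factor `sgn`. The section of `Π` over `s` has length `|s|`, so absolute
convergence means `∫ |s| |𝓕g(s)| ds < ∞`. By Plancherel, `𝓕(g')(s)` and `s 𝓕(g')(s)` are square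
integrable, so that `s 𝓕g(s) = -i 𝓕(g')(s)` is integrable by the Cauchy–Schwarz inequality.
-/

section FourierLTwo

open scoped FourierTransform

variable {V E F : Type*}
  [NormedAddCommGroup V] [InnerProductSpace ℝ V] [FiniteDimensional ℝ V]
  [MeasurableSpace V] [BorelSpace V]
  [NormedAddCommGroup E] [NormedSpace ℂ E]
  [NormedAddCommGroup F] [InnerProductSpace ℂ F] [CompleteSpace F]

lemma continuous_fourier {f : V → E} (hf : Integrable f) : Continuous (𝓕 f) :=
  VectorFourier.fourierIntegral_continuous Real.continuous_fourierChar (innerSL ℝ).continuous₂ hf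

lemma integral_fourier_smul_eq_integral_smul_fourier [CompleteSpace E] {φ : V → ℂ} {f : V → E}
    (hφ : Integrable φ) (hf : Integrable f) : ∫ ξ, 𝓕 φ ξ • f ξ = ∫ x, φ x • 𝓕 f x := by
  have h := VectorFourier.integral_fourierIntegral_smul_eq_flip (L := innerₗ V)
    Real.continuous_fourierChar (innerSL ℝ).continuous₂ hφ hf
  rwa [flip_innerₗ] at h

lemma integral_smul_fourier_toLp {f : V → F} (hf : Integrable f) (hf2 : MemLp f 2)
    (φ : SchwartzMap V ℂ) :
    ∫ x, φ x • (𝓕 (hf2.toLp f) : Lp F 2 (volume : Measure V)) x = ∫ x, φ x • 𝓕 f x :=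
  calc
    _ = ∫ ξ, 𝓕 φ ξ • hf2.toLp f ξ := by
      simpa using (DFunLike.congr_fun (Lp.fourier_toTemperedDistribution_eq (hf2.toLp f)) φ).symm
    _ = ∫ ξ, 𝓕 φ ξ • f ξ :=
      integral_congr_ae (hf2.coeFn_toLp.mono fun ξ hξ => congrArg (𝓕 φ ξ • ·) hξ)
    _ = ∫ x, φ x • 𝓕 f x := integral_fourier_smul_eq_integral_smul_fourier φ.integrable hf

lemma coeFn_fourier_toLp {f : V → F} (hf : Integrable f) (hf2 : MemLp f 2) :
    (𝓕 (hf2.toLp f) : Lp F 2 (volume : Measure V)) =ᵐ[volume] 𝓕 f := by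
  refine ae_eq_of_integral_contDiff_smul_eq ((Lp.memLp _).locallyIntegrable one_le_two)
    (continuous_fourier hf).locallyIntegrable fun φ hφ hφs => ?_
  have hφs' : HasCompactSupport (Complex.ofRealCLM ∘ φ) := hφs.comp_left rfl
  simpa using integral_smul_fourier_toLp hf hf2
    (hφs'.toSchwartzMap (Complex.ofRealCLM.contDiff.comp hφ))

lemma memLp_two_fourier {f : V → F} (hf : Integrable f) (hf2 : MemLp f 2) : MemLp (𝓕 f) 2 :=
  (memLp_congr_ae (coeFn_fourier_toLp hf hf2)).1 (Lp.memLp _)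

end FourierLTwo

section Integrability

variable {E : Type*} [NormedAddCommGroup E] [NormedSpace ℝ E]

lemma integrable_of_memLp_two_of_memLp_two_smul {u : ℝ → E} (hu : MemLp u 2)
    (hxu : MemLp (fun x => x • u x) 2) : Integrable u := by
  refine ((integrable_inv_one_add_sq.add (hu.integrable_norm_pow two_ne_zero)).add
    (hxu.integrable_norm_pow two_ne_zero)).mono' hu.aestronglyMeasurable (ae_of_all _ fun x => ?_)
  have amgm (a : ℝ) : a ≤ (1 + x ^ 2)⁻¹ + (1 + x ^ 2) * a ^ 2 := by
    have hpos : 0 < 1 + x ^ 2 := by positivity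
    rw [← mul_le_mul_iff_right₀ hpos]
    field_simp
    nlinarith [sq_nonneg ((1 + x ^ 2) * a - 1), sq_nonneg ((1 + x ^ 2) * a)]
  calc
    ‖u x‖ ≤ (1 + x ^ 2)⁻¹ + (1 + x ^ 2) * ‖u x‖ ^ 2 := amgm ‖u x‖
    _ = (1 + x ^ 2)⁻¹ + ‖u x‖ ^ 2 + ‖x • u x‖ ^ 2 := by
      rw [norm_smul, mul_pow, Real.norm_eq_abs, sq_abs]
      ring

lemma integrable_of_integrable_smul {u : ℝ → E} (hu : LocallyIntegrable u)
    (hxu : Integrable fun x => x • u x) : Integrable u := by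
  have hnear : Integrable ((Set.Icc (-1) 1).indicator u) :=
    (hu.integrableOn_isCompact isCompact_Icc).integrable_indicator measurableSet_Icc
  refine (hnear.norm.add hxu.norm).mono' hu.aestronglyMeasurable (ae_of_all _ fun x => ?_)
  rw [Pi.add_apply]
  by_cases hx : x ∈ Set.Icc (-1) 1
  · rw [Set.indicator_of_mem hx]
    exact le_add_of_nonneg_right (norm_nonneg _)
  · have hx' : 1 ≤ ‖x‖ := (not_le.1 (mt abs_le.1 hx)).le
    rw [Set.indicator_of_notMem hx, norm_zero, zero_add, norm_smul]
    exact le_mul_of_one_le_left (norm_nonneg _) hx'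

end Integrability

section FourierDeriv

open scoped FourierTransform

variable {E F : Type*} [NormedAddCommGroup E] [NormedSpace ℂ E]
  [NormedAddCommGroup F] [InnerProductSpace ℂ F] [CompleteSpace F]

lemma smul_fourier_eq_smul_fourier_deriv {f : ℝ → E} (hf : Integrable f)
    (hfd : Differentiable ℝ f) (hf' : Integrable (deriv f)) (x : ℝ) :
    x • 𝓕 f x = (2 * Real.pi * Complex.I : ℂ)⁻¹ • 𝓕 (deriv f) x := by
  have hc : (2 * Real.pi * Complex.I : ℂ) ≠ 0 := by simp [Real.pi_ne_zero]
  rw [Real.fourier_deriv hf hfd hf', smul_smul, inv_mul_cancel_left₀ hc, Complex.coe_smul]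

lemma integrable_smul_fourier {f : ℝ → E} (hf : Integrable f) (hfd : Differentiable ℝ f)
    (hf' : Integrable (deriv f)) (hFf' : Integrable (𝓕 (deriv f))) :
    Integrable fun x : ℝ => x • 𝓕 f x := by
  simp only [smul_fourier_eq_smul_fourier_deriv hf hfd hf']
  exact hFf'.smul _

lemma integrable_fourier_of_memLp_two_deriv {f : ℝ → F} (hf : Integrable f) (hf2 : MemLp f 2)
    (hfd : Differentiable ℝ f) (hf' : Integrable (deriv f)) (hf2' : MemLp (deriv f) 2) :
    Integrable (𝓕 f) := by
  refine integrable_of_memLp_two_of_memLp_two_smul (memLp_two_fourier hf hf2) ?_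
  simp only [smul_fourier_eq_smul_fourier_deriv hf hfd hf']
  exact (memLp_two_fourier hf' hf2').const_smul _

lemma integrable_fourier_of_contDiff_one {f : ℝ → F} (hf : ContDiff ℝ 1 f)
    (hs : HasCompactSupport f) : Integrable (𝓕 f) :=
  integrable_fourier_of_memLp_two_deriv
    (hf.continuous.integrable_of_hasCompactSupport hs)
    (hf.continuous.memLp_of_hasCompactSupport hs)
    hf.differentiable_one
    (hf.continuous_deriv_one.integrable_of_hasCompactSupport hs.deriv)
    (hf.continuous_deriv_one.memLp_of_hasCompactSupport hs.deriv)

lemma integrable_smul_fourier_of_contDiff_two {f : ℝ → F} (hf : ContDiff ℝ 2 f)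
    (hs : HasCompactSupport f) : Integrable fun x : ℝ => x • 𝓕 f x := by
  have hf' : ContDiff ℝ 1 (deriv f) := hf.deriv'
  exact integrable_smul_fourier (hf.continuous.integrable_of_hasCompactSupport hs)
    (hf.differentiable two_ne_zero) (hf'.continuous.integrable_of_hasCompactSupport hs.deriv)
    (integrable_fourier_of_contDiff_one hf' hs.deriv)

end FourierDeriv

section UnitaryFourier

open scoped FourierTransform

variable {f : ℝ → ℂ}

lemma ofReal_sqrt_two_pi_ne_zero : (√(2 * Real.pi) : ℂ) ≠ 0 :=
  Complex.ofReal_ne_zero.2 (Real.sqrt_pos.2 Real.two_pi_pos).ne'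

lemma fourierTransform'_eq_fourier_div (f : ℝ → ℂ) (s : ℝ) :
    fourierTransform' f s = (√(2 * Real.pi) : ℂ)⁻¹ * 𝓕 f (s / (2 * Real.pi)) := by
  have hpi : (Real.pi : ℂ) ≠ 0 := Complex.ofReal_ne_zero.2 Real.pi_ne_zero
  rw [fourierTransform', Real.fourier_real_eq_integral_exp_smul, Complex.real_smul,
    Complex.ofReal_inv]
  congr 2 with x
  rw [smul_eq_mul, mul_comm]
  congr 2
  push_cast
  field_simp

lemma continuous_fourierTransform' (hf : Integrable f) : Continuous (fourierTransform' f) := by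
  have := continuous_fourier hf
  rw [funext (fourierTransform'_eq_fourier_div f)]
  fun_prop

lemma integrable_smul_fourierTransform' (hf : Integrable fun x : ℝ => x • 𝓕 f x) :
    Integrable fun s : ℝ => s • fourierTransform' f s := by
  convert (hf.comp_div Real.two_pi_pos.ne').const_mul
    ((2 * Real.pi : ℂ) * (√(2 * Real.pi) : ℂ)⁻¹) using 2 with s
  have hpi : (Real.pi : ℂ) ≠ 0 := Complex.ofReal_ne_zero.2 Real.pi_ne_zero
  rw [fourierTransform'_eq_fourier_div, Complex.real_smul, Complex.real_smul]
  push_cast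
  field_simp

lemma integrable_fourierTransform'_iff : Integrable (fourierTransform' f) ↔ Integrable (𝓕 f) := by
  have hc : IsUnit (√(2 * Real.pi) : ℂ)⁻¹ :=
    (inv_ne_zero ofReal_sqrt_two_pi_ne_zero).isUnit
  rw [funext (fourierTransform'_eq_fourier_div f), integrable_const_mul_iff hc]
  simpa only [div_eq_inv_mul] using
    integrable_comp_mul_left_iff (𝓕 f) (inv_ne_zero Real.two_pi_pos.ne')

lemma integral_fourierTransform'_mul_exp (hfc : Continuous f) (hf : Integrable f)
    (hFf : Integrable (fourierTransform' f)) (x : ℝ) :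
    ∫ s : ℝ, fourierTransform' f s * Complex.exp (Complex.I * s * x) = √(2 * Real.pi) * f x := by
  have hpi : (Real.pi : ℂ) ≠ 0 := Complex.ofReal_ne_zero.2 Real.pi_ne_zero
  have hinv : ∫ ξ : ℝ, Complex.exp (2 * Real.pi * Complex.I * ξ * x) * 𝓕 f ξ = f x := by
    rw [← congrFun (hfc.fourierInv_fourier_eq hf (integrable_fourierTransform'_iff.1 hFf)) x,
      Real.fourierInv_eq_fourier_neg, Real.fourier_real_eq_integral_exp_smul]
    congr 1 with ξ
    rw [smul_eq_mul]
    congr 2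
    push_cast
    ring
  have hsqrt : (√(2 * Real.pi) : ℂ)⁻¹ * (2 * Real.pi) = √(2 * Real.pi) := by
    rw [inv_mul_eq_div]
    exact_mod_cast Real.div_sqrt (x := 2 * Real.pi)
  calc
    ∫ s : ℝ, fourierTransform' f s * Complex.exp (Complex.I * s * x)
      = ∫ s : ℝ, (√(2 * Real.pi) : ℂ)⁻¹ *
          (Complex.exp (2 * Real.pi * Complex.I * ↑(s / (2 * Real.pi)) * x) *
            𝓕 f (s / (2 * Real.pi))) := by
      congr 1 with s
      have harg : 2 * Real.pi * Complex.I * ↑(s / (2 * Real.pi)) * x = Complex.I * s * x := by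
        push_cast
        field_simp
      rw [fourierTransform'_eq_fourier_div, harg]
      ring
    _ = (√(2 * Real.pi) : ℂ)⁻¹ * ((2 * Real.pi) * f x) := by
      rw [integral_const_mul, Measure.integral_comp_div
        (fun ξ : ℝ => Complex.exp (2 * Real.pi * Complex.I * ξ * x) * 𝓕 f ξ), hinv,
        abs_of_pos Real.two_pi_pos, Complex.real_smul]
      push_cast
      rfl
    _ = √(2 * Real.pi) * f x := by rw [← mul_assoc, hsqrt]

end UnitaryFourier

namespace PiRegion

lemma mk_mem_iff {s t : ℝ} : (s, t) ∈ PiRegion ↔ t ∈ Set.uIcc 0 s :=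
  Set.mem_uIcc.symm

lemma isClosed : IsClosed PiRegion :=
  ((isClosed_le continuous_const continuous_snd).inter
    (isClosed_le continuous_snd continuous_fst)).union
  ((isClosed_le continuous_fst continuous_snd).inter
    (isClosed_le continuous_snd continuous_const))

lemma indicator_mk {M : Type*} [Zero M] (f : ℝ × ℝ → M) (s t : ℝ) :
    PiRegion.indicator f (s, t) = (Set.uIcc 0 s).indicator (fun t => f (s, t)) t := by
  classical
  simp only [Set.indicator_apply, mk_mem_iff]

variable {E : Type*} [NormedAddCommGroup E] [NormedSpace ℝ E]

lemma integrable_indicator_comp_fst {h : ℝ → E} (hm : AEStronglyMeasurable h)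
    (hi : Integrable fun s => s • h s) : Integrable (PiRegion.indicator fun p => h p.1) := by
  rw [Measure.volume_eq_prod, integrable_prod_iff
    (hm.comp_fst.indicator isClosed.measurableSet)]
  simp only [indicator_mk]
  refine ⟨ae_of_all _ fun s => ?_, hi.norm.congr (ae_of_all _ fun s => ?_)⟩
  · exact (integrableOn_const isCompact_uIcc.measure_ne_top).integrable_indicator
      measurableSet_uIcc
  · simp only [norm_indicator_eq_indicator_norm]
    rw [integral_indicator measurableSet_uIcc, setIntegral_const, measureReal_def,
      Real.volume_interval, ENNReal.toReal_ofReal (abs_nonneg _), sub_zero, norm_smul,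
      Real.norm_eq_abs, smul_eq_mul]

lemma integral_indicator {f : ℝ × ℝ → E} (hf : Integrable (PiRegion.indicator f)) :
    ∫ p, PiRegion.indicator f p = ∫ s, ∫ t in Set.uIcc 0 s, f (s, t) := by
  rw [Measure.volume_eq_prod] at hf ⊢
  rw [integral_prod _ hf]
  simp only [indicator_mk, MeasureTheory.integral_indicator measurableSet_uIcc]

end PiRegion

section Sign

lemma measurable_realSign : Measurable Real.sign :=
  Measurable.ite measurableSet_Iio measurable_const
    (Measurable.ite measurableSet_Ioi measurable_const measurable_const)

lemma norm_realSign_le_one (s : ℝ) : ‖Real.sign s‖ ≤ 1 := by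
  rcases Real.sign_apply_eq s with h | h | h <;> simp [h]

lemma sign_smul_setIntegral_uIcc {E : Type*} [NormedAddCommGroup E] [NormedSpace ℝ E]
    (f : ℝ → E) (s : ℝ) : Real.sign s • ∫ t in Set.uIcc 0 s, f t = ∫ t in (0 : ℝ)..s, f t := by
  rcases lt_trichotomy s 0 with hs | rfl | hs
  · rw [Real.sign_of_neg hs, Set.uIcc_of_ge hs.le, integral_Icc_eq_integral_Ioc,
      intervalIntegral.integral_of_ge hs.le, neg_one_smul]
  · simp
  · rw [Real.sign_of_pos hs, Set.uIcc_of_le hs.le, integral_Icc_eq_integral_Ioc,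
      intervalIntegral.integral_of_le hs.le, one_smul]

end Sign

section Duhamel

variable {lam₀ lam₁ : ℝ}

lemma norm_exp_I_mul_real_mul_real (s l : ℝ) : ‖Complex.exp (Complex.I * s * l)‖ = 1 := by
  rw [mul_assoc, ← Complex.ofReal_mul, Complex.norm_exp_I_mul_ofReal]

lemma integral_exp_mul_exp (hne : lam₀ ≠ lam₁) (s : ℝ) :
    ∫ t in (0 : ℝ)..s, Complex.exp (Complex.I * (s - t) * lam₀) * Complex.exp (Complex.I * t * lam₁)
      = (Complex.exp (Complex.I * s * lam₁) - Complex.exp (Complex.I * s * lam₀)) /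
          (Complex.I * (lam₁ - lam₀)) := by
  have hc : Complex.I * ((lam₁ : ℂ) - lam₀) ≠ 0 :=
    mul_ne_zero Complex.I_ne_zero (sub_ne_zero.2 (Complex.ofReal_injective.ne hne.symm))
  have hsplit (t : ℝ) :
      Complex.exp (Complex.I * (s - t) * lam₀) * Complex.exp (Complex.I * t * lam₁) =
        Complex.exp (Complex.I * s * lam₀) * Complex.exp (Complex.I * (lam₁ - lam₀) * t) := by
    rw [← Complex.exp_add, ← Complex.exp_add]
    ring_nf
  have hend : Complex.exp (Complex.I * s * lam₁) =
      Complex.exp (Complex.I * s * lam₀) * Complex.exp (Complex.I * (lam₁ - lam₀) * s) := by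
    simpa using hsplit s
  simp only [hsplit]
  rw [intervalIntegral.integral_const_mul, integral_exp_mul_complex hc, hend, Complex.ofReal_zero,
    mul_zero, Complex.exp_zero, mul_div_assoc', mul_sub, mul_one]

/-- The integrand of the representation of the divided difference at `(lam₀, lam₁)`, with an
arbitrary function `h` in place of the Fourier transform and without the restriction to `Π`. -/
noncomputable def bsIntegrand (h : ℝ → ℂ) (lam₀ lam₁ : ℝ) (p : ℝ × ℝ) : ℂ :=
  (Real.sign p.1 : ℂ) * h p.1 * Complex.exp (Complex.I * (p.1 - p.2) * lam₀) *
    Complex.exp (Complex.I * p.2 * lam₁)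

variable {h : ℝ → ℂ}

lemma aestronglyMeasurable_bsIntegrand (hm : AEStronglyMeasurable h) :
    AEStronglyMeasurable (bsIntegrand h lam₀ lam₁) := by
  have hsign : AEStronglyMeasurable (fun p : ℝ × ℝ => (Real.sign p.1 : ℂ)) :=
    (Complex.measurable_ofReal.comp
      (measurable_realSign.comp measurable_fst)).aestronglyMeasurable
  have hexp₀ : Continuous fun p : ℝ × ℝ => Complex.exp (Complex.I * (p.1 - p.2) * lam₀) := by
    fun_prop
  have hexp₁ : Continuous fun p : ℝ × ℝ => Complex.exp (Complex.I * p.2 * lam₁) := by fun_prop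
  exact ((hsign.mul hm.comp_fst).mul hexp₀.aestronglyMeasurable).mul hexp₁.aestronglyMeasurable

lemma norm_bsIntegrand_le (p : ℝ × ℝ) : ‖bsIntegrand h lam₀ lam₁ p‖ ≤ ‖h p.1‖ := by
  rw [bsIntegrand, ← Complex.ofReal_sub, norm_mul, norm_mul, norm_mul,
    norm_exp_I_mul_real_mul_real, norm_exp_I_mul_real_mul_real, mul_one, mul_one,
    Complex.norm_real]
  exact mul_le_of_le_one_left (norm_nonneg _) (norm_realSign_le_one _)

lemma integrable_indicator_bsIntegrand (hm : AEStronglyMeasurable h)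
    (hi : Integrable fun s => s • h s) :
    Integrable (PiRegion.indicator (bsIntegrand h lam₀ lam₁)) := by
  refine (PiRegion.integrable_indicator_comp_fst hm hi).mono
    ((aestronglyMeasurable_bsIntegrand hm).indicator PiRegion.isClosed.measurableSet)
    (ae_of_all _ fun p => ?_)
  rw [norm_indicator_eq_indicator_norm, norm_indicator_eq_indicator_norm]
  exact Set.indicator_le_indicator (norm_bsIntegrand_le p)

lemma setIntegral_uIcc_bsIntegrand (hne : lam₀ ≠ lam₁) (s : ℝ) :
    ∫ t in Set.uIcc 0 s, bsIntegrand h lam₀ lam₁ (s, t) =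
      (h s * Complex.exp (Complex.I * s * lam₁) - h s * Complex.exp (Complex.I * s * lam₀)) /
        (Complex.I * (lam₁ - lam₀)) := by
  have hfactor (t : ℝ) : bsIntegrand h lam₀ lam₁ (s, t) = h s * Real.sign s •
      (Complex.exp (Complex.I * (s - t) * lam₀) * Complex.exp (Complex.I * t * lam₁)) := by
    rw [bsIntegrand, Complex.real_smul]
    ring
  simp only [hfactor]
  rw [integral_const_mul, integral_smul, sign_smul_setIntegral_uIcc, integral_exp_mul_exp hne,
    ← mul_sub, mul_div_assoc]

lemma integral_indicator_bsIntegrand (hne : lam₀ ≠ lam₁) (hh : Integrable h)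
    (hi : Integrable fun s => s • h s) :
    ∫ p, PiRegion.indicator (bsIntegrand h lam₀ lam₁) p =
      ((∫ s, h s * Complex.exp (Complex.I * s * lam₁)) -
        ∫ s, h s * Complex.exp (Complex.I * s * lam₀)) / (Complex.I * (lam₁ - lam₀)) := by
  have hint (l : ℝ) : Integrable fun s : ℝ => h s * Complex.exp (Complex.I * s * l) :=
    hh.mul_bdd (c := 1) (by fun_prop) (ae_of_all _ fun s => (norm_exp_I_mul_real_mul_real s l).le)
  rw [PiRegion.integral_indicator (integrable_indicator_bsIntegrand hh.aestronglyMeasurable hi)]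
  simp only [setIntegral_uIcc_bsIntegrand hne]
  rw [integral_div, integral_sub (hint lam₁) (hint lam₀)]

end Duhamel

theorem divided_difference_BS_representation_general
    {g : ℝ → ℂ} (hgc : Continuous g) (hg : Integrable g)
    (hFg : Integrable fun s : ℝ => s • fourierTransform' g s)
    {lam₀ lam₁ : ℝ} (hne : lam₀ ≠ lam₁) :
    Integrable (PiRegion.indicator (bsIntegrand (fourierTransform' g) lam₀ lam₁)) ∧
    (g lam₀ - g lam₁) / ((lam₀ - lam₁ : ℝ) : ℂ) = Complex.I / (√(2 * Real.pi) : ℂ) *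
      ∫ p : ℝ × ℝ, PiRegion.indicator (bsIntegrand (fourierTransform' g) lam₀ lam₁) p := by
  have hcont := continuous_fourierTransform' hg
  have hint := integrable_of_integrable_smul hcont.locallyIntegrable hFg
  have hsqrt := ofReal_sqrt_two_pi_ne_zero
  have hsub₀ : (lam₀ : ℂ) - lam₁ ≠ 0 := sub_ne_zero.2 (Complex.ofReal_injective.ne hne)
  have hsub₁ : (lam₁ : ℂ) - lam₀ ≠ 0 := sub_ne_zero.2 (Complex.ofReal_injective.ne hne.symm)
  refine ⟨integrable_indicator_bsIntegrand hcont.aestronglyMeasurable hFg, ?_⟩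
  rw [integral_indicator_bsIntegrand hne hint hFg, integral_fourierTransform'_mul_exp hgc hg hint,
    integral_fourierTransform'_mul_exp hgc hg hint, Complex.ofReal_sub]
  field_simp
  ring

/-- For `g : ℝ → ℝ` which is `C²` with compact support and `λ₀ ≠ λ₁`, the
divided difference of `g` has the integral representation
`(g(λ₀)-g(λ₁))/(λ₀-λ₁)
  = (i/√(2π)) ∫_{ℝ²} 1_Π(s₀,s₁) sgn(s₀) 𝓕g(s₀) e^{i(s₀-s₁)λ₀} e^{is₁λ₁} d(s₀,s₁)`,
the integral being absolutely convergent. -/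
theorem divided_difference_BS_representation
    (g : ℝ → ℝ) (hg : ContDiff ℝ 2 g) (hsupp : HasCompactSupport g)
    (lam₀ lam₁ : ℝ) (hne : lam₀ ≠ lam₁) :
    Integrable (PiRegion.indicator (fun p : ℝ × ℝ =>
        (Real.sign p.1 : ℂ) * fourierTransform' (fun x => Complex.ofReal (g x)) p.1 *
          Complex.exp (Complex.I * (p.1 - p.2) * lam₀) *
          Complex.exp (Complex.I * p.2 * lam₁))) ∧
    ((g lam₀ - g lam₁ : ℝ) : ℂ) / ((lam₀ - lam₁ : ℝ) : ℂ) =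
      (Complex.I / (Real.sqrt (2 * Real.pi) : ℂ)) *
        ∫ p : ℝ × ℝ, PiRegion.indicator (fun p : ℝ × ℝ =>
          (Real.sign p.1 : ℂ) * fourierTransform' (fun x => Complex.ofReal (g x)) p.1 *
            Complex.exp (Complex.I * (p.1 - p.2) * lam₀) *
            Complex.exp (Complex.I * p.2 * lam₁)) p := by
  have hgc : ContDiff ℝ 2 fun x => (g x : ℂ) := Complex.ofRealCLM.contDiff.comp hg
  have hs : HasCompactSupport fun x => (g x : ℂ) := hsupp.comp_left Complex.ofReal_zero
  simpa only [Complex.ofReal_sub (g lam₀)] using! divided_difference_BS_representation_general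
    hgc.continuous (hgc.continuous.integrable_of_hasCompactSupport hs)
    (integrable_smul_fourierTransform' (integrable_smul_fourier_of_contDiff_two hgc hs)) hne
end
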